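/- Let F₃ be the free group on generators a, b, c, let r = a·b·a⁻¹·b⁻¹·c, and let N be the normal closure of r in F₃. For w ∈ N define the combinatorial area A(w) as the least d such that w can be written as a product of d conjugates of r or r⁻¹, and define the (a,b)-length l(w) as the number of occurrences of a^{±1} and b^{±1} in a cyclic reduction of w. Then A(w) ≤ l(w)/2 for every w ∈ N. -/

import Mathlib

namespace PS

abbrev F3 := FreeGroup (Fin 3)

def a : F3 := FreeGroup.of 0
def b : F3 := FreeGroup.of 1
def c : F3 := FreeGroup.of 2

def r : F3 := a * b * a⁻¹ * b⁻¹ * c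

def N : Subgroup F3 := Subgroup.normalClosure {r}

/-- Combinatorial area: least `d` such that `w` is a product of `d` conjugates of `r` or `r⁻¹`. -/
noncomputable def area (w : F3) : ℕ :=
  sInf {d | ∃ g : Fin d → F3, ∃ ε : Fin d → ℤ, (∀ i, ε i = 1 ∨ ε i = -1) ∧
    w = (List.ofFn fun i => g i * r ^ ε i * (g i)⁻¹).prod}

/-- Number of occurrences of `a^{±1}, b^{±1}` in the reduced word of `w`. -/
def abCount (w : F3) : ℕ :=
  (w.toWord.filter fun p => decide (p.1 ≠ 2)).length

/-- `(a,b)`-length: occurrences of `a^{±1}, b^{±1}` in a cyclic reduction of `w`, realized as the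
minimum of `abCount` over the conjugacy class of `w`. -/
noncomputable def abLen (w : F3) : ℕ :=
  sInf {n | ∃ g : F3, abCount (g * w * g⁻¹) = n}

end PS

/-!
The quotient `F₃ / N` is the fundamental group of a once-punctured torus whose cusp is generated by
`c`. A diagonal of the relator pentagon cuts it into two triangles, so that the Cayley complex,
with the cosets of `⟨c⟩` collapsed to cusps, becomes the Farey tessellation. A closed edge path of
length `l` there spans at most `l` triangles: as long as some turn of the path is a backtrack or
goes around a single triangle, it can be shortened, at the cost of at most one triangle per edge
removed, and a path without such turns is not closed, by ping-pong in `SL(2, ℤ)`.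

The triangles form two classes. The diagonal may be read as `a * b` or as `c⁻¹ * b * a`; each
reading makes one class of triangles trivial and the other a conjugate of the relator. Following
both readings at once, in `F₃ × F₃`, expresses `w` by `d₁` and by `d₂` relators with
`d₁ + d₂ ≤ l`, and the smaller of the two is at most `l / 2`.
-/

open Pointwise MatrixGroups
open ModularGroup (S T)

lemma conj_mem_pow {G : Type*} [Group G] {R : Set G} {g : G} (hR : ∀ x ∈ R, g * x * g⁻¹ ∈ R)
    {k : ℕ} {x : G} (hx : x ∈ R ^ k) : g * x * g⁻¹ ∈ R ^ k := by
  have himage : MulAut.conj g '' R ⊆ R := Set.image_subset_iff.2 hR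
  have hpow := Set.pow_subset_pow_left himage (n := k)
  rw [← Set.image_pow] at hpow
  exact hpow ⟨x, hx, rfl⟩

lemma exists_mem_pow_of_mem_union_prod_pow {M M' : Type*} [Monoid M] [Monoid M'] {A : Set M}
    {B : Set M'} {k : ℕ} {x : M × M'} (hx : x ∈ (A ×ˢ {1} ∪ {1} ×ˢ B) ^ k) :
    ∃ i j, i + j = k ∧ x.1 ∈ A ^ i ∧ x.2 ∈ B ^ j := by
  induction k generalizing x with
  | zero =>
    obtain rfl : x = 1 := by simpa using hx
    exact ⟨0, 0, rfl, by simp, by simp⟩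
  | succ k ih =>
    rw [pow_succ] at hx
    obtain ⟨y, hy, z, hz, rfl⟩ := hx
    obtain ⟨i, j, rfl, hi, hj⟩ := ih hy
    rcases hz with ⟨hzA, hz1⟩ | ⟨hz1, hzB⟩
    · refine ⟨i + 1, j, by omega, ?_, ?_⟩
      · exact pow_succ A i ▸ Set.mul_mem_mul hi hzA
      · simpa [Set.mem_singleton_iff.1 hz1] using hj
    · refine ⟨i, j + 1, by omega, ?_, ?_⟩
      · simpa [Set.mem_singleton_iff.1 hz1] using hi
      · exact pow_succ B j ▸ Set.mul_mem_mul hj hzB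

lemma S_mul_T_zpow_mul_apply_zero (m : ℤ) (g : SL(2, ℤ)) :
    (S * T ^ (-m) * g) 0 0 = -g 1 0 := by
  simp [Matrix.SpecialLinearGroup.coe_mul, ModularGroup.coe_S, ModularGroup.coe_T_zpow,
    Matrix.mul_apply, Fin.sum_univ_two]

lemma S_mul_T_zpow_mul_apply_one (m : ℤ) (g : SL(2, ℤ)) :
    (S * T ^ (-m) * g) 1 0 = g 0 0 - m * g 1 0 := by
  simp [Matrix.SpecialLinearGroup.coe_mul, ModularGroup.coe_S, ModularGroup.coe_T_zpow,
    Matrix.mul_apply, Fin.sum_univ_two, sub_eq_add_neg]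

lemma lt_abs_sub_mul {α : Type*} [CommRing α] [LinearOrder α] [IsStrictOrderedRing α] {x y m : α}
    (hxy : |x| < |y|) (hm : 2 ≤ |m|) : |y| < |x - m * y| := by
  have hmul : 2 * |y| ≤ |m * y| := by rw [abs_mul]; gcongr
  rw [abs_sub_comm]
  linarith [abs_sub_abs_le_abs_sub (m * y) x]

/-- A labelling, invariant under a group action, of the oriented edges of the Farey tessellation
by elements of `G`. The edges leaving a cusp are indexed by `ℤ` in cyclic order. Turning around the
cusp by six edges is the action of its parabolic generator, with label `cusp`. The edge leaving one
cusp with index `n` is the edge leaving the next cusp with index `n + 3`, traversed backwards. -/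
structure FareyLabelling (G : Type*) [Group G] where
  cusp : G
  edge : ℤ → G
  edge_mul_edge_add_three : ∀ n, edge n * edge (n + 3) = cusp⁻¹

namespace FareyLabelling

variable {G H : Type*} [Group G] [Group H] (E : FareyLabelling G)

/-- The labelling with prescribed labels on the cusp generator and on the edges of indices
`0`, `1`, `2`. -/
def ofTriple (z x₀ x₁ x₂ : G) : FareyLabelling G where
  cusp := z
  edge n :=
    let letter : ZMod 6 → G := ![x₀, x₁, x₂, x₀⁻¹, x₁⁻¹, x₂⁻¹]
    z ^ (n / 6) * letter n * z ^ (-((n + 3) / 6))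
  edge_mul_edge_add_three n := by
    set letter : ZMod 6 → G := ![x₀, x₁, x₂, x₀⁻¹, x₁⁻¹, x₂⁻¹]
    have hopposite : ∀ i, letter i * letter (i + 3) = 1 := by
      intro i
      fin_cases i
      exacts [mul_inv_cancel x₀, mul_inv_cancel x₁, mul_inv_cancel x₂, inv_mul_cancel x₀,
        inv_mul_cancel x₁, inv_mul_cancel x₂]
    have hindex : (n + 3 + 3) / 6 = n / 6 + 1 := by omega
    dsimp only
    rw [Int.cast_add, Int.cast_ofNat, eq_inv_of_mul_eq_one_right (hopposite n), hindex]
    group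

lemma edge_add_three (n : ℤ) : E.edge (n + 3) = (E.edge n)⁻¹ * E.cusp⁻¹ := by
  rw [← E.edge_mul_edge_add_three n, inv_mul_cancel_left]

lemma edge_add_six (n : ℤ) : E.edge (n + 6) = E.cusp * E.edge n * E.cusp⁻¹ := by
  rw [show n + 6 = n + 3 + 3 by ring, edge_add_three, edge_add_three]
  group

lemma map_edge {E' : FareyLabelling H} (f : G →* H) (hcusp : f E.cusp = E'.cusp)
    (h₀ : f (E.edge 0) = E'.edge 0) (h₁ : f (E.edge 1) = E'.edge 1)
    (h₂ : f (E.edge 2) = E'.edge 2) (n : ℤ) : f (E.edge n) = E'.edge n := by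
  have hperiodic : Function.Periodic (fun n ↦ f (E.edge n) = E'.edge n) 3 := by
    intro n
    simp [edge_add_three, hcusp]
  have hreduce := hperiodic.sub_zsmul_eq (x := n) (n / 3)
  rw [← hreduce, smul_eq_mul, mul_comm, ← Int.emod_def]
  have := Int.emod_nonneg n three_ne_zero
  have := Int.emod_lt_of_pos n three_pos
  interval_cases n % 3 <;> assumption

/-- The boundary label of the triangle between the edges of indices `n` and `n + 1` at a cusp. -/
def triangle (n : ℤ) : G := E.edge n * E.edge (n + 2) * (E.edge (n + 1))⁻¹

lemma triangle_add_two (n : ℤ) :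
    E.triangle (n + 2) = (E.edge n)⁻¹ * E.triangle n * ((E.edge n)⁻¹)⁻¹ := by
  simp only [triangle, show n + 2 + 2 = n + 1 + 3 by ring, show n + 2 + 1 = n + 3 by ring,
    edge_add_three]
  group

lemma triangle_mem {R : Set G} (hR : ∀ g, ∀ x ∈ R, g * x * g⁻¹ ∈ R) (h₀ : E.triangle 0 ∈ R)
    (h₁ : E.triangle 1 ∈ R) (n : ℤ) : E.triangle n ∈ R := by
  have hperiodic : Function.Periodic (fun n ↦ E.triangle n ∈ R) 2 := by
    intro n
    simp only [triangle_add_two]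
    exact propext ⟨fun h ↦ by simpa [mul_assoc] using hR (E.edge n) _ h, hR _ _⟩
  have hreduce := hperiodic.sub_zsmul_eq (x := n) (n / 2)
  rw [← hreduce, smul_eq_mul, mul_comm, ← Int.emod_def]
  rcases Int.emod_two_eq n with h | h <;> rwa [h]

/-- The label of the edge path that leaves a cusp along the edge of index `n` and whose turns at the
successive cusps are listed: after arriving with index `k`, a turn `m` means leaving along the edge
of index `k + m`. The last entry only records a position at the final cusp, so a path has as many
edges as list entries, and positions are rounded down to a multiple of `6`. -/
def path : ℤ → List ℤ → G
  | n, [] => E.cusp ^ (n / 6)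
  | n, m :: l => E.edge n * path (n + 3 + m) l

lemma path_nil (n : ℤ) : E.path n [] = E.cusp ^ (n / 6) := rfl

lemma path_cons (n m : ℤ) (l : List ℤ) :
    E.path n (m :: l) = E.edge n * E.path (n + 3 + m) l := rfl

lemma path_add_six (n : ℤ) (l : List ℤ) : E.path (n + 6) l = E.cusp * E.path n l := by
  induction l generalizing n with
  | nil => rw [path_nil, path_nil, show (n + 6) / 6 = 1 + n / 6 by omega, zpow_one_add]
  | cons m l ih =>
    rw [path_cons, path_cons, show n + 6 + 3 + m = n + 3 + m + 6 by ring, ih, edge_add_six]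
    group

lemma edge_mul_path (n p : ℤ) (l : List ℤ) :
    E.edge n * E.path p l = E.path n ((p - n - 3) :: l) := by
  rw [path_cons, show n + 3 + (p - n - 3) = p by ring]

lemma inv_edge_mul_path (n p : ℤ) (l : List ℤ) :
    (E.edge n)⁻¹ * E.path p l = E.path (n + 3) ((p - n) :: l) := by
  rw [path_cons, show n + 3 + 3 + (p - n) = p + 6 by ring, path_add_six, edge_add_three]
  group

lemma map_path {E' : FareyLabelling H} (f : G →* H) (hcusp : f E.cusp = E'.cusp)
    (hedge : ∀ n, f (E.edge n) = E'.edge n) (n : ℤ) (l : List ℤ) :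
    f (E.path n l) = E'.path n l := by
  induction l generalizing n with
  | nil => rw [path_nil, path_nil, map_zpow, hcusp]
  | cons m l ih => rw [path_cons, path_cons, map_mul, hedge, ih]

lemma path_zero_turn (n m : ℤ) (l : List ℤ) : E.path n (0 :: m :: l) = E.path (n + m) l := by
  rw [path_cons, path_cons, add_zero, ← mul_assoc, edge_mul_edge_add_three,
    show n + 3 + 3 + m = n + m + 6 by ring, path_add_six, inv_mul_cancel_left]

lemma path_neg_one_turn (n m : ℤ) (l : List ℤ) :
    E.path n (-1 :: m :: l) = E.triangle n * E.path (n + 1) ((m + 1) :: l) := by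
  simp only [path_cons, triangle, show n + 3 + -1 = n + 2 by ring,
    show n + 2 + 3 + m = n + 1 + 3 + (m + 1) by ring]
  group

lemma path_one_turn (n m : ℤ) (l : List ℤ) :
    E.path n (1 :: m :: l) = (E.triangle (n - 1))⁻¹ * E.path (n - 1) ((m - 1) :: l) := by
  rw [eq_inv_mul_iff_mul_eq]
  simp only [path_cons, triangle, sub_add_cancel, show n - 1 + 2 = n + 1 by ring,
    show n + 3 + 1 = n + 1 + 3 by ring, edge_add_three,
    show n + 1 + 3 + 3 + m = n - 1 + 3 + (m - 1) + 6 by ring, path_add_six]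
  group

/-- A list of turns is taut if the path neither backtracks (turn `0`) nor runs along two sides of
one triangle (turn `±1`). The last entry of the list is not a turn. -/
def IsTaut (l : List ℤ) : Prop := ∀ m ∈ l.dropLast, 2 ≤ |m|

lemma isTaut_nil : IsTaut [] := by simp [IsTaut]

lemma isTaut_singleton (m : ℤ) : IsTaut [m] := by simp [IsTaut]

lemma isTaut_cons_cons {m m' : ℤ} {l : List ℤ} :
    IsTaut (m :: m' :: l) ↔ 2 ≤ |m| ∧ IsTaut (m' :: l) := by
  simp [IsTaut]

variable {R : Set G}

lemma exists_shorter_path (htri : ∀ n, E.triangle n ∈ R)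
    (htri_inv : ∀ n, (E.triangle n)⁻¹ ∈ R) (n m' : ℤ) (l : List ℤ) {m : ℤ} (hm : |m| < 2) :
    ∃ n' l' k, ∃ x ∈ R ^ k, l'.length ≤ l.length + 1 ∧ k + l'.length ≤ l.length + 2 ∧
      E.path n (m :: m' :: l) = x * E.path n' l' := by
  obtain ⟨hlow, hhigh⟩ := abs_lt.1 hm
  obtain rfl | rfl | rfl : m = -1 ∨ m = 0 ∨ m = 1 := by omega
  · refine ⟨n + 1, (m' + 1) :: l, 1, E.triangle n, ?_, ?_, ?_, E.path_neg_one_turn n m' l⟩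
    · simpa using htri n
    all_goals simp only [List.length_cons]; omega
  · refine ⟨n + m', l, 0, 1, ?_, ?_, ?_, by rw [one_mul, E.path_zero_turn]⟩
    · simp
    all_goals omega
  · refine ⟨n - 1, (m' - 1) :: l, 1, (E.triangle (n - 1))⁻¹, ?_, ?_, ?_, E.path_one_turn n m' l⟩
    · simpa using htri_inv (n - 1)
    all_goals simp only [List.length_cons]; omega

theorem exists_isTaut_path (hR : ∀ g, ∀ x ∈ R, g * x * g⁻¹ ∈ R) (htri : ∀ n, E.triangle n ∈ R)
    (htri_inv : ∀ n, (E.triangle n)⁻¹ ∈ R) (n : ℤ) (l : List ℤ) :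
    ∃ n' l' k, ∃ x ∈ R ^ k, IsTaut l' ∧ k + l'.length ≤ l.length ∧
      E.path n l = x * E.path n' l' := by
  induction hlen : l.length using Nat.strong_induction_on generalizing n l with
  | _ len ih =>
  subst hlen
  rcases l with _ | ⟨q, l⟩
  · exact ⟨n, [], 0, 1, by simp, isTaut_nil, by simp, by simp⟩
  -- Once the tail is taut, only the turn into it can fail to be.
  obtain ⟨n₁, l₁, k₁, x₁, hx₁, htaut, hlen₁, hpath₁⟩ := ih l.length (by simp) (n + 3 + q) l rfl
  set m := n₁ - (n + 3) with hm
  have hcons : E.path n (q :: l) = E.edge n * x₁ * (E.edge n)⁻¹ * E.path n (m :: l₁) := by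
    rw [path_cons, path_cons, hpath₁, hm, add_sub_cancel]
    group
  have hx := conj_mem_pow (hR (E.edge n)) hx₁
  rcases l₁ with _ | ⟨m', l₂⟩
  · exact ⟨n, [m], k₁, _, hx, isTaut_singleton m, by
      simp only [List.length_cons, List.length_nil] at hlen₁ ⊢; omega, hcons⟩
  rcases le_or_gt 2 |m| with hturn | hturn
  · exact ⟨n, m :: m' :: l₂, k₁, _, hx, isTaut_cons_cons.2 ⟨hturn, htaut⟩,
      by simp only [List.length_cons] at hlen₁ ⊢; omega, hcons⟩
  obtain ⟨n₃, l₃, k₃, x₃, hx₃, hlt₃, hlen₃, hpath₃⟩ :=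
    E.exists_shorter_path htri htri_inv n m' l₂ hturn
  simp only [List.length_cons] at hlen₁ ih ⊢
  obtain ⟨n₄, l₄, k₄, x₄, hx₄, htaut₄, hlen₄, hpath₄⟩ := ih l₃.length (by omega) n₃ l₃ rfl
  refine ⟨n₄, l₄, k₁ + k₃ + k₄, E.edge n * x₁ * (E.edge n)⁻¹ * x₃ * x₄, ?_,
    htaut₄, by omega, ?_⟩
  · rw [pow_add, pow_add]
    exact Set.mul_mem_mul (Set.mul_mem_mul hx hx₃) hx₄
  · rw [hcons, hpath₃, hpath₄]
    simp only [mul_assoc]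

/-- The labelling of the Farey tessellation by its symmetries: `T` fixes the cusp `∞`, shifting the
indices of the edges leaving it by one, and `S` reverses the edge of index `0`. The sign of `cusp`
comes from `S * S = -1`. -/
def modular : FareyLabelling SL(2, ℤ) where
  cusp := -T ^ (-6 : ℤ)
  edge n := T ^ (-n) * S * T ^ (n + 3)
  edge_mul_edge_add_three n := by
    have hS : S * S = -1 := by decide
    calc T ^ (-n) * S * T ^ (n + 3) * (T ^ (-(n + 3)) * S * T ^ (n + 3 + 3))
        = T ^ (-n) * (S * S) * T ^ (n + 6) := by group
      _ = (-T ^ (-6 : ℤ))⁻¹ := by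
        rw [hS, mul_neg_one, neg_mul, ← zpow_add, inv_neg, ← zpow_neg]
        group

lemma T_zpow_mul_modular_path_cons (n m : ℤ) (l : List ℤ) :
    T ^ n * modular.path n (m :: l) =
      S * T ^ (-m) * (T ^ (n + 3 + m) * modular.path (n + 3 + m) l) := by
  rw [path_cons, modular]
  group

lemma modular_cusp_zpow (k : ℤ) :
    modular.cusp ^ k = T ^ (-6 * k) ∨ modular.cusp ^ k = -T ^ (-6 * k) := by
  rw [modular, zpow_mul]
  exact k.even_or_odd.imp (fun h ↦ h.neg_zpow _) (fun h ↦ h.neg_zpow _)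

lemma modular_cusp_zpow_eq_one {k : ℤ} (h : modular.cusp ^ k = 1) : k = 0 := by
  rcases modular_cusp_zpow k with hk | hk <;> rw [h] at hk <;>
    simpa [ModularGroup.coe_T_zpow] using congr_arg (fun g : SL(2, ℤ) ↦ g 0 1) hk

lemma T_zpow_mul_modular_path_nil_apply (n p : ℤ) :
    (T ^ p * modular.path n []) 0 0 ≠ 0 ∧ (T ^ p * modular.path n []) 1 0 = 0 := by
  rw [path_nil]
  rcases modular_cusp_zpow (n / 6) with h | h <;> rw [h] <;>
    simp [Matrix.SpecialLinearGroup.coe_mul, ModularGroup.coe_T_zpow, Matrix.mul_apply]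

lemma abs_T_zpow_mul_modular_path_apply_lt (n m : ℤ) (l : List ℤ) (hl : IsTaut (m :: l)) :
    |(T ^ n * modular.path n (m :: l)) 0 0| < |(T ^ n * modular.path n (m :: l)) 1 0| := by
  rw [T_zpow_mul_modular_path_cons, S_mul_T_zpow_mul_apply_zero, S_mul_T_zpow_mul_apply_one,
    abs_neg]
  rcases l with _ | ⟨m', l⟩
  · obtain ⟨h₀, h₁⟩ := T_zpow_mul_modular_path_nil_apply (n + 3 + m) (n + 3 + m)
    simpa [h₁] using h₀
  · obtain ⟨hm, htaut⟩ := isTaut_cons_cons.1 hl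
    exact lt_abs_sub_mul (abs_T_zpow_mul_modular_path_apply_lt _ _ _ htaut) hm

theorem path_eq_one_of_modular_path_eq_one {n : ℤ} {l : List ℤ} (hl : IsTaut l)
    (h : modular.path n l = 1) : E.path n l = 1 := by
  rcases l with _ | ⟨m, l⟩
  · rw [path_nil] at h ⊢
    rw [modular_cusp_zpow_eq_one h, zpow_zero]
  · have hlt := abs_T_zpow_mul_modular_path_apply_lt n m l hl
    simp [h, ModularGroup.coe_T_zpow] at hlt

end FareyLabelling

namespace PS

open FareyLabelling

/-- The conjugates of `r` and `r⁻¹`, so that `area w` is the least `d` with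
`w ∈ conjugates ^ d`. -/
def conjugates : Set F3 := {x | ∃ (g : F3) (ε : ℤ), (ε = 1 ∨ ε = -1) ∧ x = g * r ^ ε * g⁻¹}

lemma conj_mem_conjugates (g : F3) : ∀ x ∈ conjugates, g * x * g⁻¹ ∈ conjugates := by
  rintro _ ⟨h, ε, hε, rfl⟩
  exact ⟨g * h, ε, hε, by group⟩

lemma inv_mem_conjugates {x : F3} (hx : x ∈ conjugates) : x⁻¹ ∈ conjugates := by
  obtain ⟨g, ε, hε, rfl⟩ := hx
  exact ⟨g, -ε, by omega, by group⟩

lemma conjugates_pow_subset_N (k : ℕ) : conjugates ^ k ⊆ N := by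
  refine Subgroup.pow_subset ?_
  rintro _ ⟨g, ε, -, rfl⟩
  exact Subgroup.normalClosure_normal.conj_mem _
    (zpow_mem (Subgroup.subset_normalClosure (Set.mem_singleton r)) ε) g

lemma area_eq_sInf (w : F3) : area w = sInf {d | w ∈ conjugates ^ d} := by
  refine congr_arg sInf (Set.ext fun d ↦ ⟨?_, fun hw ↦ ?_⟩)
  · rintro ⟨g, ε, hε, rfl⟩
    exact Set.mem_pow.2 ⟨fun i ↦ ⟨_, g i, ε i, hε i, rfl⟩, rfl⟩
  · obtain ⟨f, rfl⟩ := Set.mem_pow.1 hw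
    choose g ε hε hf using fun i ↦ (f i).2
    exact ⟨g, ε, hε, by simp only [hf]⟩

lemma area_le {w : F3} {d : ℕ} (hw : w ∈ conjugates ^ d) : area w ≤ d :=
  area_eq_sInf w ▸ Nat.sInf_le hw

lemma area_conj (g w : F3) : area (g * w * g⁻¹) = area w := by
  simp only [area_eq_sInf]
  refine congr_arg sInf (Set.ext fun d ↦ ⟨fun h ↦ ?_, conj_mem_pow (conj_mem_conjugates g)⟩)
  simpa [mul_assoc] using conj_mem_pow (conj_mem_conjugates g⁻¹) h

/-- The relators of `F3 × F3` in which one coordinate is a conjugate of `r` or `r⁻¹` and the other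
is trivial. -/
def relators : Set (F3 × F3) := conjugates ×ˢ {1} ∪ {1} ×ˢ conjugates

lemma conj_mem_relators (g : F3 × F3) : ∀ x ∈ relators, g * x * g⁻¹ ∈ relators := by
  rintro ⟨x, y⟩ (⟨hx, rfl : y = 1⟩ | ⟨rfl : x = 1, hy⟩)
  · exact .inl ⟨conj_mem_conjugates _ _ hx, by simp⟩
  · exact .inr ⟨by simp, conj_mem_conjugates _ _ hy⟩

lemma inv_mem_relators {x : F3 × F3} (hx : x ∈ relators) : x⁻¹ ∈ relators := by
  rcases hx with ⟨hx, hy⟩ | ⟨hx, hy⟩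
  · exact .inl ⟨inv_mem_conjugates hx, by simpa using hy⟩
  · exact .inr ⟨by simpa using hx, inv_mem_conjugates hy⟩

/-- The labelling of the Farey tessellation attached to the presentation of `F3 ⧸ N`, with both
readings `a * b` and `c⁻¹ * b * a` of the diagonal of the relator pentagon. -/
def doubled : FareyLabelling (F3 × F3) :=
  ofTriple (c, c) (a * b, c⁻¹ * b * a) (a, a) (b⁻¹, b⁻¹)

lemma doubled_edge_zero : doubled.edge 0 = (a * b, c⁻¹ * b * a) := by simp [doubled, ofTriple]

lemma doubled_edge_one : doubled.edge 1 = (a, a) := by simp [doubled, ofTriple]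

lemma doubled_edge_two : doubled.edge 2 = (b⁻¹, b⁻¹) := by simp [doubled, ofTriple]

lemma doubled_edge_three : doubled.edge 3 = (b⁻¹ * a⁻¹ * c⁻¹, a⁻¹ * b⁻¹) := by
  simp [doubled, ofTriple, mul_assoc]

lemma doubled_triangle_zero_mem : doubled.triangle 0 ∈ relators := by
  refine .inr ⟨?_, 1, -1, by simp, ?_⟩ <;>
    simp [triangle, doubled_edge_zero, doubled_edge_one, doubled_edge_two, r, mul_assoc]

lemma doubled_triangle_one_mem : doubled.triangle 1 ∈ relators := by
  refine .inl ⟨⟨b⁻¹ * c, -1, by simp, ?_⟩, ?_⟩ <;>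
    simp [triangle, doubled_edge_one, doubled_edge_two, doubled_edge_three, r, mul_assoc]

lemma doubled_triangle_mem (n : ℤ) : doubled.triangle n ∈ relators :=
  doubled.triangle_mem conj_mem_relators doubled_triangle_zero_mem doubled_triangle_one_mem n

/-- The representation of the once-punctured torus group `F3 ⧸ N` in `SL(2, ℤ)` through which it
acts on the Farey tessellation. -/
def toModular : F3 →* SL(2, ℤ) :=
  FreeGroup.lift ![modular.edge 1, (modular.edge 2)⁻¹, modular.cusp]

lemma toModular_eq_one {w : F3} (hw : w ∈ N) : toModular w = 1 := by
  have hr : toModular r = 1 := by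
    simp only [toModular, r, a, b, c, map_mul, map_inv, FreeGroup.lift_apply_of]
    decide
  exact Subgroup.normalClosure_le_normal (N := toModular.ker) (by simpa using hr) hw

lemma toModular_doubled_path (n : ℤ) (l : List ℤ) :
    toModular (doubled.path n l).1 = modular.path n l := by
  refine doubled.map_path (toModular.comp (MonoidHom.fst F3 F3)) ?_
    (doubled.map_edge _ ?_ ?_ ?_ ?_) n l
  · simp [doubled, ofTriple, toModular, c]
  · simp [doubled, ofTriple, toModular, c]
  · simp only [MonoidHom.comp_apply, MonoidHom.coe_fst, doubled_edge_zero, toModular, a, b,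
      map_mul, FreeGroup.lift_apply_of]
    decide
  · simp [doubled_edge_one, toModular, a]
  · simp [doubled_edge_two, toModular, b]

lemma doubled_path_eq_one {n : ℤ} {l : List ℤ} (hl : IsTaut l) (h : (doubled.path n l).1 ∈ N) :
    doubled.path n l = 1 :=
  doubled.path_eq_one_of_modular_path_eq_one hl
    (by rw [← toModular_doubled_path, toModular_eq_one h])

lemma exists_path_eq_map_mk {G : Type*} [Group G] (E : FareyLabelling G) (f : F3 →* G)
    (ha : f a = E.edge 1) (hb : f b = (E.edge 2)⁻¹) (hc : f c = E.cusp)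
    (L : List (Fin 3 × Bool)) : ∃ n l, f (FreeGroup.mk L) = E.path n l ∧
      l.length = (L.filter fun p ↦ decide (p.1 ≠ 2)).length := by
  induction L with
  | nil => exact ⟨0, [], by simp [path_nil, ← FreeGroup.one_eq_mk], rfl⟩
  | cons p L ih =>
    obtain ⟨n, l, hpath, hlen⟩ := ih
    have hcons : FreeGroup.mk (p :: L) = FreeGroup.mk [p] * FreeGroup.mk L := rfl
    rw [hcons, map_mul, hpath]
    rcases p with ⟨i, _ | _⟩ <;> fin_cases i
    · refine ⟨1 + 3, (n - 1) :: l, ?_, by simp [hlen]⟩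
      change f a⁻¹ * E.path n l = _
      rw [map_inv, ha, E.inv_edge_mul_path]
    · refine ⟨2, (n - 2 - 3) :: l, ?_, by simp [hlen]⟩
      change f b⁻¹ * E.path n l = _
      rw [map_inv, hb, inv_inv, E.edge_mul_path]
    · refine ⟨n - 6, l, ?_, by simp [hlen]⟩
      change f c⁻¹ * E.path n l = _
      rw [map_inv, hc, inv_mul_eq_iff_eq_mul, ← E.path_add_six, sub_add_cancel]
    · refine ⟨1, (n - 1 - 3) :: l, ?_, by simp [hlen]⟩
      change f a * E.path n l = _
      rw [ha, E.edge_mul_path]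
    · refine ⟨2 + 3, (n - 2) :: l, ?_, by simp [hlen]⟩
      change f b * E.path n l = _
      rw [hb, E.inv_edge_mul_path]
    · refine ⟨n + 6, l, ?_, by simp [hlen]⟩
      change f c * E.path n l = _
      rw [hc, E.path_add_six]

lemma exists_pow_add_le_abCount {w : F3} (hw : w ∈ N) :
    ∃ i j, i + j ≤ abCount w ∧ w ∈ conjugates ^ i ∧ w ∈ conjugates ^ j := by
  obtain ⟨n, l, hpath, hlen⟩ := exists_path_eq_map_mk doubled
    ((MonoidHom.id F3).prod (MonoidHom.id F3)) doubled_edge_one.symm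
    (by simp [doubled_edge_two]) rfl w.toWord
  obtain ⟨n', l', k, x, hx, htaut, hk, hpath'⟩ := doubled.exists_isTaut_path conj_mem_relators
    doubled_triangle_mem (fun n ↦ inv_mem_relators (doubled_triangle_mem n)) n l
  obtain ⟨i, j, rfl, hi, hj⟩ := exists_mem_pow_of_mem_union_prod_pow hx
  rw [FreeGroup.mk_toWord, hpath'] at hpath
  have hclosed : (doubled.path n' l').1 ∈ N := by
    rwa [← N.mul_mem_cancel_left (conjugates_pow_subset_N i hi), ← Prod.fst_mul, ← hpath]
  rw [doubled_path_eq_one htaut hclosed, mul_one] at hpath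
  obtain rfl : (w, w) = x := hpath
  exact ⟨i, j, by rw [abCount, ← hlen]; omega, hi, hj⟩

theorem two_mul_area_le_abCount {w : F3} (hw : w ∈ N) : 2 * area w ≤ abCount w := by
  obtain ⟨i, j, hij, hi, hj⟩ := exists_pow_add_le_abCount hw
  have := area_le hi
  have := area_le hj
  omega

end PS

open PS in
theorem stmt_0 : ∀ w ∈ N, (area w : ℝ) ≤ (abLen w : ℝ) / 2 := by
  intro w hw
  obtain ⟨g, hg⟩ : abLen w ∈ {n | ∃ g, abCount (g * w * g⁻¹) = n} := Nat.sInf_mem ⟨_, 1, rfl⟩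
  have harea : 2 * area w ≤ abLen w := by
    rw [← area_conj g, ← hg]
    exact two_mul_area_le_abCount (Subgroup.normalClosure_normal.conj_mem w hw g)
  rw [le_div_iff₀' two_pos]
  exact_mod_cast harea
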